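/- arXiv:1607.01505 — 3 statements merged into one kernel-verified Lean document; each statement's English description precedes it below -/
import Mathlib

section
/- (Poincaré inequality for mixed nonlocal boundary conditions) There exists a constant C = C(N, s, Ω, Σ1) > 0 such that ∫_Ω u² dx ≤ C ∬_Q |u(x) − u(y)|² / |x − y|^{N+2s} dx dy for every u ∈ E^s_{Σ1}. -/
open MeasureTheory Set

noncomputable section

/-- Euclidean space ℝ^N. -/
abbrev Rn (N : ℕ) := EuclideanSpace ℝ (Fin N)

/-- The set Q := ℝ^{2N} \ ((ℝ^N \ Ω) × (ℝ^N \ Ω)). -/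
def Qset (N : ℕ) (Ω : Set (Rn N)) : Set (Rn N × Rn N) :=
  Set.univ \ (Ωᶜ ×ˢ Ωᶜ)

/-- The kernel (u(x)-u(y))(v(x)-v(y))/|x-y|^{N+2s}. -/
def frKer (N : ℕ) (s : ℝ) (u v : Rn N → ℝ) (p : Rn N × Rn N) : ℝ :=
  (u p.1 - u p.2) * (v p.1 - v p.2) / ‖p.1 - p.2‖ ^ ((N : ℝ) + 2 * s)

/-- Membership in the space E^s_{Σ₁}: measurable, vanishing a.e. on Σ₁,
with finite L²(Ω) norm and finite Gagliardo seminorm over Q. -/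
def MemE (N : ℕ) (s : ℝ) (Ω S1 : Set (Rn N)) (u : Rn N → ℝ) : Prop :=
  Measurable u ∧ (∀ᵐ x : Rn N, x ∈ S1 → u x = 0) ∧
  IntegrableOn (fun x => (u x) ^ 2) Ω ∧
  IntegrableOn (frKer N s u u) (Qset N Ω)

/-- Weak solution of the mixed problem (-Δ)^s u = f in Ω, u = 0 in Σ₁, 𝒩_s u = 0 in Σ₂. -/
def IsWeakSolMixed (N : ℕ) (s aNs : ℝ) (Ω S1 : Set (Rn N)) (f u : Rn N → ℝ) : Prop :=
  MemE N s Ω S1 u ∧ ∀ φ : Rn N → ℝ, MemE N s Ω S1 φ →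
    (aNs / 2) * ∫ p in Qset N Ω, frKer N s u φ p = ∫ x in Ω, f x * φ x

/-- Poincaré inequality for the space E^s_{Σ₁} with mixed nonlocal boundary
conditions. -/
theorem poincare_inequality_mixed
    {N : ℕ} (hN : 1 ≤ N) {s : ℝ} (hs0 : 0 < s) (hs1 : s < 1)
    {Ω S1 S2 : Set (Rn N)} (hΩo : IsOpen Ω) (hΩb : Bornology.IsBounded Ω)
    (hΩc : IsConnected Ω)
    (hS1o : IsOpen S1) (hS2o : IsOpen S2)
    (hS1m : 0 < volume S1) (hS2m : 0 < volume S2)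
    (hdisj : Disjoint S1 S2) (hcov : closure S1 ∪ closure S2 = Ωᶜ) :
    ∃ C : ℝ, 0 < C ∧ ∀ u : Rn N → ℝ, MemE N s Ω S1 u →
      (∫ x in Ω, (u x) ^ 2) ≤ C * ∫ p in Qset N Ω, frKer N s u u p := by
  have hS1Ω : S1 ⊆ Ωᶜ := fun y hy => hcov ▸ Or.inl (subset_closure hy)
  have hne : S1.Nonempty := by
    by_contra h
    rw [Set.not_nonempty_iff_eq_empty] at h
    simp [h] at hS1m
  obtain ⟨z, hz⟩ := hne
  obtain ⟨r, hr, hB⟩ := Metric.isOpen_iff.mp hS1o z hz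
  obtain ⟨R, hR⟩ := hΩb.subset_ball z
  set B : Set (Rn N) := Metric.ball z r with hBdef
  set D : ℝ := |R| + r with hD
  have hDpos : 0 < D := by positivity
  set a : ℝ := (N : ℝ) + 2 * s with ha
  have hapos : 0 ≤ a := by positivity
  have hBm : 0 < volume.real B := by
    rw [Measure.real, ENNReal.toReal_pos_iff]
    exact ⟨Metric.measure_ball_pos _ _ hr, measure_ball_lt_top⟩
  have hDa : 0 < D ^ a := Real.rpow_pos_of_pos hDpos a
  refine ⟨D ^ a / volume.real B, by positivity, ?_⟩
  rintro u ⟨hum, hu0, hu2, huK⟩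
  have hsub : Ω ×ˢ B ⊆ Qset N Ω := by
    rintro ⟨x, y⟩ ⟨hx, hy⟩
    exact ⟨trivial, fun h => h.1 hx⟩
  have hmeas : MeasurableSet (Ω ×ˢ B) := hΩo.measurableSet.prod Metric.isOpen_ball.measurableSet
  have hnn : ∀ p, 0 ≤ frKer N s u u p := fun p =>
    div_nonneg (mul_self_nonneg _) (Real.rpow_nonneg (norm_nonneg _) _)
  have h1 : ∫ p in Ω ×ˢ B, frKer N s u u p ≤ ∫ p in Qset N Ω, frKer N s u u p :=
    setIntegral_mono_set huK (Filter.Eventually.of_forall hnn) hsub.eventuallyLE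
  have h2 : ∫ p in Ω ×ˢ B, (u p.1 ^ 2 * (1 : ℝ)) = (∫ x in Ω, u x ^ 2) * volume.real B := by
    rw [Measure.volume_eq_prod, setIntegral_prod_mul (fun x => u x ^ 2) (fun _ => (1 : ℝ))]
    simp
  have hae : ∀ᵐ p : Rn N × Rn N, p.2 ∈ S1 → u p.2 = 0 := by
    rw [Measure.volume_eq_prod]
    exact Measure.quasiMeasurePreserving_snd.ae hu0
  have hintB : IntegrableOn (fun _ : Rn N => (1 : ℝ)) B :=
    integrableOn_const measure_ball_lt_top.ne
  have hint : IntegrableOn (fun p : Rn N × Rn N => u p.1 ^ 2 * (1 : ℝ)) (Ω ×ˢ B) := by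
    rw [IntegrableOn, Measure.volume_eq_prod, ← Measure.prod_restrict]
    exact Integrable.mul_prod hu2 hintB
  have h3 : ∫ p in Ω ×ˢ B, (u p.1 ^ 2 * (1 : ℝ)) ≤ ∫ p in Ω ×ˢ B, D ^ a * frKer N s u u p := by
    refine setIntegral_mono_on_ae hint ((huK.mono_set hsub).const_mul _) hmeas ?_
    filter_upwards [hae] with p hp hpm
    obtain ⟨hx, hy⟩ := hpm
    have hu := hp (hB hy)
    have hxy : p.1 ≠ p.2 := fun h => hS1Ω (hB hy) (h ▸ hx)
    have hpos : 0 < ‖p.1 - p.2‖ := norm_pos_iff.mpr (sub_ne_zero.mpr hxy)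
    have hle : ‖p.1 - p.2‖ ≤ D := by
      have e1 : dist p.1 z < R := hR hx
      have e2 : dist p.2 z < r := hy
      have e3 := dist_triangle_right p.1 p.2 z
      rw [← dist_eq_norm]
      linarith [le_abs_self R]
    have hpw : ‖p.1 - p.2‖ ^ a ≤ D ^ a := Real.rpow_le_rpow hpos.le hle hapos
    have hpp : 0 < ‖p.1 - p.2‖ ^ a := Real.rpow_pos_of_pos hpos a
    rw [frKer, hu, ← ha, sub_zero, mul_one, ← mul_div_assoc, le_div_iff₀ hpp]
    nlinarith [mul_le_mul_of_nonneg_left hpw (sq_nonneg (u p.1))]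
  rw [h2, integral_const_mul] at h3
  rw [div_mul_eq_mul_div, le_div_iff₀ hBm]
  exact h3.trans (mul_le_mul_of_nonneg_left h1 hDa.le)
end
end

section
/- The first eigenvalue of the fractional Laplacian with zero mixed boundary conditions is strictly positive; that is, λ1 := inf { (a_{N,s}/2) ∬_Q |u(x) − u(y)|² / |x − y|^{N+2s} dx dy / ∫_Ω u² dx : u ∈ E^s_{Σ1}, ∫_Ω u² dx > 0 } satisfies λ1 > 0. -/
open MeasureTheory Set

noncomputable section

/-- The lower bound (Poincare inequality) for functions vanishing on `S1`. -/
lemma poincare_aux {N : ℕ} {s : ℝ} (hs0 : 0 < s)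
    {Ω S1 : Set (Rn N)} (hΩo : IsOpen Ω) (hΩb : Bornology.IsBounded Ω)
    (hS1o : IsOpen S1) (hS1m : 0 < volume S1) (hd : S1 ⊆ Ωᶜ) :
    ∃ c : ℝ, 0 < c ∧ ∀ u : Rn N → ℝ, MemE N s Ω S1 u →
      c * ∫ x in Ω, (u x) ^ 2 ≤ ∫ p in Qset N Ω, frKer N s u u p := by
  obtain ⟨y0, hy0⟩ := nonempty_of_measure_ne_zero hS1m.ne'
  obtain ⟨ρ, hρ, hT⟩ := Metric.isOpen_iff.1 hS1o y0 hy0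
  set T := Metric.ball y0 ρ with hTdef
  obtain ⟨R, hR⟩ := hΩb.subset_closedBall y0
  set D : ℝ := |R| + ρ with hD
  have hDpos : 0 < D := by positivity
  set e : ℝ := (N : ℝ) + 2 * s with he
  have hepos : 0 < e := by positivity
  have hTpos : 0 < (volume T).toReal :=
    ENNReal.toReal_pos (Metric.measure_ball_pos _ _ hρ).ne' measure_ball_lt_top.ne
  refine ⟨(volume T).toReal / D ^ e, by positivity, ?_⟩
  rintro u ⟨hum, hu0, hu2, huK⟩
  have hsub : Ω ×ˢ T ⊆ Qset N Ω := by
    rintro ⟨x, y⟩ ⟨hx, hy⟩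
    refine ⟨trivial, fun h => h.1 hx⟩
  have hnn : ∀ p, 0 ≤ frKer N s u u p := by
    intro p
    unfold frKer
    exact div_nonneg (mul_self_nonneg _) (Real.rpow_nonneg (norm_nonneg _) _)
  have h1 : ∫ p in Ω ×ˢ T, frKer N s u u p ≤ ∫ p in Qset N Ω, frKer N s u u p :=
    setIntegral_mono_set huK (Filter.Eventually.of_forall hnn) hsub.eventuallyLE
  have hprod : ∫ p in Ω ×ˢ T, (u p.1) ^ 2 * (1 / D ^ e) =
      (∫ x in Ω, (u x) ^ 2) * ∫ y in T, (1 / D ^ e) := by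
    rw [Measure.volume_eq_prod]
    exact setIntegral_prod_mul (fun x => (u x) ^ 2) (fun _ => 1 / D ^ e) Ω T
  have hintT : Integrable (fun _ : Rn N => 1 / D ^ e) (volume.restrict T) :=
    integrableOn_const measure_ball_lt_top.ne
  have hint : IntegrableOn (fun p : Rn N × Rn N => (u p.1) ^ 2 * (1 / D ^ e)) (Ω ×ˢ T) := by
    unfold IntegrableOn
    rw [Measure.volume_eq_prod, ← Measure.prod_restrict]
    exact Integrable.mul_prod hu2 hintT
  have hae : ∀ᵐ p : Rn N × Rn N, p.2 ∈ S1 → u p.2 = 0 := by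
    rw [Measure.volume_eq_prod]
    exact Measure.quasiMeasurePreserving_snd.ae hu0
  have h2 : ∫ p in Ω ×ˢ T, (u p.1) ^ 2 * (1 / D ^ e) ≤ ∫ p in Ω ×ˢ T, frKer N s u u p := by
    refine setIntegral_mono_on_ae hint (huK.mono_set hsub)
      (hΩo.measurableSet.prod measurableSet_ball) ?_
    filter_upwards [hae] with p hp hpm
    have hz := hp (hT hpm.2)
    have hne : p.1 ≠ p.2 := fun h => hd (hT hpm.2) (h ▸ hpm.1)
    have hpos : 0 < ‖p.1 - p.2‖ := norm_pos_iff.2 (sub_ne_zero.2 hne)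
    have hle : ‖p.1 - p.2‖ ≤ D := by
      have ha : dist p.1 y0 ≤ R := hR hpm.1
      have hb : dist p.2 y0 < ρ := hpm.2
      rw [← dist_eq_norm]
      have := dist_triangle_right p.1 p.2 y0
      have := le_abs_self R
      linarith
    unfold frKer
    rw [hz, sub_zero, ← sq, div_eq_mul_one_div ((u p.1) ^ 2)]
    refine mul_le_mul_of_nonneg_left ?_ (sq_nonneg _)
    exact one_div_le_one_div_of_le (Real.rpow_pos_of_pos hpos _)
      (Real.rpow_le_rpow hpos.le hle hepos.le)
  have h3 : ∫ y in T, (1 / D ^ e) = (volume T).toReal * (1 / D ^ e) := by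
    rw [setIntegral_const, smul_eq_mul, Measure.real]
  calc _ = (∫ x in Ω, (u x) ^ 2) * ∫ y in T, (1 / D ^ e) := by rw [h3]; ring
    _ ≤ _ := by rw [← hprod]; exact h2.trans h1

/-- Radial profile dominating the kernel of a bounded Lipschitz function. -/
def kprof (N : ℕ) (s : ℝ) (t : ℝ) : ℝ := min (t ^ 2) 1 / t ^ ((N : ℝ) + 2 * s)

lemma kprof_integrable {N : ℕ} (hN : 1 ≤ N) {s : ℝ} (hs0 : 0 < s) (hs1 : s < 1) :
    Integrable (fun z : Rn N => kprof N s ‖z‖) := by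
  have : NeZero N := ⟨by omega⟩
  have : Nontrivial (Rn N) := by infer_instance
  rw [integrable_fun_norm_addHaar]
  have hdim : Module.finrank ℝ (Rn N) = N := by simp
  rw [hdim]
  have hc : ∀ t : ℝ, 0 < t → t ^ (N - 1) = t ^ ((N : ℝ) - 1) := by
    intro t ht
    rw [← Real.rpow_natCast]; congr 1; push_cast [hN]; ring
  rw [← Ioc_union_Ioi_eq_Ioi (zero_le_one (α := ℝ))]
  refine IntegrableOn.union ?_ ?_
  · have h : IntegrableOn (fun t : ℝ => t ^ (1 - 2 * s)) (Ioc 0 1) := by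
      rw [← intervalIntegrable_iff_integrableOn_Ioc_of_le zero_le_one]
      exact intervalIntegral.intervalIntegrable_rpow' (by linarith)
    refine h.congr_fun ?_ measurableSet_Ioc
    intro t ht
    have h0 : 0 < t := ht.1
    have : t ^ 2 ≤ 1 := pow_le_one₀ h0.le ht.2
    simp only [kprof, smul_eq_mul, min_eq_left this, hc t h0]
    rw [← Real.rpow_natCast t 2, ← Real.rpow_sub h0, ← Real.rpow_add h0]
    congr 1; push_cast; ring
  · have h : IntegrableOn (fun t : ℝ => t ^ (-1 - 2 * s)) (Ioi 1) :=
      integrableOn_Ioi_rpow_of_lt (by linarith) one_pos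
    refine h.congr_fun ?_ measurableSet_Ioi
    intro t ht
    have h1 : 1 < t := ht
    have h0 : 0 < t := by linarith
    have : 1 ≤ t ^ 2 := one_le_pow₀ h1.le
    simp only [kprof, smul_eq_mul, min_eq_right this, hc t h0]
    rw [one_div, ← Real.rpow_neg h0.le, ← Real.rpow_add h0]
    congr 1; ring

/-- Integrability of the dominating kernel on `Ω × ℝ^N`. -/
lemma kprof_prod {N : ℕ} (hN : 1 ≤ N) {s : ℝ} (hs0 : 0 < s) (hs1 : s < 1)
    {Ω : Set (Rn N)} (hΩb : Bornology.IsBounded Ω) :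
    IntegrableOn (fun p : Rn N × Rn N => kprof N s ‖p.1 - p.2‖) (Ω ×ˢ univ) := by
  have hk := kprof_integrable hN hs0 hs1
  have h1 : Integrable (fun _ : Rn N => (1 : ℝ)) (volume.restrict Ω) :=
    integrableOn_const hΩb.measure_lt_top.ne
  have := Integrable.mul_prod h1 hk
  have hm : Measurable (kprof N s) := by unfold kprof; fun_prop
  unfold IntegrableOn
  rw [Measure.volume_eq_prod, ← Measure.prod_restrict, Measure.restrict_univ]
  rw [integrable_prod_iff (by
    apply Measurable.aestronglyMeasurable
    exact hm.comp (by fun_prop))]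
  refine ⟨Filter.Eventually.of_forall fun x => hk.comp_sub_left x, ?_⟩
  have : ∀ x : Rn N, ∫ y, ‖kprof N s ‖x - y‖‖ = ∫ y : Rn N, ‖kprof N s ‖y‖‖ := fun x =>
    integral_sub_left_eq_self (fun y : Rn N => ‖kprof N s ‖y‖‖) volume x
  simp only [this]
  exact integrableOn_const hΩb.measure_lt_top.ne

lemma exists_test {N : ℕ} (hN : 1 ≤ N) {s : ℝ} (hs0 : 0 < s) (hs1 : s < 1)
    {Ω S1 : Set (Rn N)} (hΩo : IsOpen Ω) (hΩb : Bornology.IsBounded Ω)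
    (hne : Ω.Nonempty) (hd : S1 ⊆ Ωᶜ) :
    ∃ u : Rn N → ℝ, MemE N s Ω S1 u ∧ 0 < ∫ x in Ω, (u x) ^ 2 := by
  obtain ⟨x0, hx0⟩ := hne
  obtain ⟨r', hr', hB'⟩ := Metric.isOpen_iff.1 hΩo x0 hx0
  set r := min r' 1
  have hr : 0 < r := lt_min hr' one_pos
  have hr1 : r ≤ 1 := min_le_right _ _
  have hB : Metric.ball x0 r ⊆ Ω := (Metric.ball_subset_ball (min_le_left _ _)).trans hB'
  set u : Rn N → ℝ := fun x => max (r - dist x x0) 0 with hu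
  have huc : Continuous u := by fun_prop
  have hu0 : ∀ x, 0 ≤ u x := fun x => le_max_right _ _
  have hu1 : ∀ x, u x ≤ 1 := fun x => max_le (by linarith [dist_nonneg (x := x) (y := x0)]) zero_le_one
  have hlip : ∀ x y, |u x - u y| ≤ ‖x - y‖ := by
    intro x y
    refine (abs_max_sub_max_le_abs _ _ _).trans ?_
    rw [sub_sub_sub_cancel_left, ← dist_eq_norm, dist_comm x y]
    exact abs_dist_sub_le y x x0
  have hu2 : IntegrableOn (fun x => (u x) ^ 2) Ω := by
    refine Integrable.mono' (g := fun _ => (1 : ℝ)) (integrableOn_const hΩb.measure_lt_top.ne)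
      (by fun_prop) (Filter.Eventually.of_forall fun x => ?_)
    rw [Real.norm_eq_abs, abs_of_nonneg (sq_nonneg _)]
    exact pow_le_one₀ (hu0 x) (hu1 x)
  have hbd : ∀ p, ‖frKer N s u u p‖ ≤ kprof N s ‖p.1 - p.2‖ := by
    intro p
    unfold frKer kprof
    have hnn := Real.rpow_nonneg (norm_nonneg (p.1 - p.2)) ((N : ℝ) + 2 * s)
    rw [Real.norm_eq_abs, abs_of_nonneg (div_nonneg (mul_self_nonneg _) hnn)]
    refine div_le_div_of_nonneg_right ?_ hnn
    rw [← sq]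
    refine le_min ?_ ?_
    · rw [← sq_abs]; exact pow_le_pow_left₀ (abs_nonneg _) (hlip _ _) 2
    · rw [sq_le_one_iff_abs_le_one, abs_le]
      constructor <;> linarith [hu0 p.1, hu0 p.2, hu1 p.1, hu1 p.2]
  have hmeas : Measurable (frKer N s u u) := by
    have := huc.measurable
    unfold frKer; fun_prop
  have hI := kprof_prod hN hs0 hs1 hΩb
  have hI1 : IntegrableOn (frKer N s u u) (Ω ×ˢ univ) :=
    Integrable.mono' hI hmeas.aestronglyMeasurable (Filter.Eventually.of_forall hbd)
  have hI2 : IntegrableOn (frKer N s u u) (univ ×ˢ Ω) := by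
    have hsw := (Measure.measurePreserving_swap (μ := (volume : Measure (Rn N)))
      (ν := (volume : Measure (Rn N))))
    have := (hsw.integrableOn_comp_preimage MeasurableEquiv.prodComm.measurableEmbedding
      (f := frKer N s u u) (s := Ω ×ˢ univ)).2 hI1
    have e1 : frKer N s u u ∘ Prod.swap = frKer N s u u := by
      funext p
      simp only [frKer, Function.comp, Prod.fst_swap, Prod.snd_swap, norm_sub_rev p.2 p.1]
      ring
    have e2 : (Prod.swap ⁻¹' (Ω ×ˢ (univ : Set (Rn N)))) = univ ×ˢ Ω := by
      ext p; simp
    rw [e1, e2] at this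
    exact this
  refine ⟨u, ⟨huc.measurable, ?_, hu2, ?_⟩, ?_⟩
  · refine Filter.Eventually.of_forall fun x hx => max_eq_right ?_
    have : x ∉ Metric.ball x0 r := fun h => hd hx (hB h)
    rw [Metric.mem_ball, not_lt] at this
    linarith
  · refine (hI1.union hI2).mono_set ?_
    rintro ⟨x, y⟩ ⟨-, h⟩
    simp only [mem_prod, mem_compl_iff, not_and_or, not_not] at h
    rcases h with h | h
    · exact Or.inl ⟨h, trivial⟩
    · exact Or.inr ⟨trivial, h⟩
  · rw [setIntegral_pos_iff_support_of_nonneg_ae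
      (Filter.Eventually.of_forall fun x => sq_nonneg (u x)) hu2]
    refine (Metric.measure_ball_pos volume x0 hr).trans_le (measure_mono fun x hx => ⟨?_, hB hx⟩)
    have : dist x x0 < r := hx
    have : 0 < u x := lt_max_of_lt_left (by linarith)
    exact (pow_pos this 2).ne'

/-- The first eigenvalue of the fractional Laplacian with zero mixed boundary
conditions is strictly positive. -/
theorem first_eigenvalue_positive
    {N : ℕ} (hN : 1 ≤ N) {s aNs : ℝ} (hs0 : 0 < s) (hs1 : s < 1) (haNs : 0 < aNs)
    {Ω S1 S2 : Set (Rn N)} (hΩo : IsOpen Ω) (hΩb : Bornology.IsBounded Ω)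
    (hΩc : IsConnected Ω)
    (hS1o : IsOpen S1) (hS2o : IsOpen S2)
    (hS1m : 0 < volume S1) (hS2m : 0 < volume S2)
    (hdisj : Disjoint S1 S2) (hcov : closure S1 ∪ closure S2 = Ωᶜ) :
    0 < sInf { r : ℝ | ∃ u : Rn N → ℝ, MemE N s Ω S1 u ∧
      0 < ∫ x in Ω, (u x) ^ 2 ∧
      r = ((aNs / 2) * ∫ p in Qset N Ω, frKer N s u u p) / ∫ x in Ω, (u x) ^ 2 } := by
  have hd : S1 ⊆ Ωᶜ := by
    rw [← hcov]; exact subset_closure.trans subset_union_left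
  obtain ⟨c, hc, hP⟩ := poincare_aux hs0 hΩo hΩb hS1o hS1m hd
  obtain ⟨u, hu, hupos⟩ := exists_test hN hs0 hs1 hΩo hΩb hΩc.nonempty hd
  have hcc : 0 < aNs / 2 * c := by positivity
  refine hcc.trans_le (le_csInf ⟨_, u, hu, hupos, rfl⟩ ?_)
  rintro _ ⟨v, hv, hvpos, rfl⟩
  rw [le_div_iff₀ hvpos, mul_assoc]
  exact mul_le_mul_of_nonneg_left (hP v hv) (by positivity)
end
end

section
/- Let λ1 be the first eigenvalue of the fractional Laplacian with zero mixed boundary conditions, let χ1 ∈ E^s_{Σ1} be the associated normalized positive first eigenfunction, and let ξ0 be the weak solution of the mixed problem with right-hand side f ≡ 1. Then there exists a constant C = C(Ω, N, s, Σ1, Σ2) > 0 such that C^{-1} ξ0(x) ≤ χ1(x) ≤ C ξ0(x) for a.e. x ∈ Ω. -/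
open MeasureTheory Set

noncomputable section

lemma Qset_meas {N : ℕ} {Ω : Set (Rn N)} (h : IsOpen Ω) : MeasurableSet (Qset N Ω) :=
  MeasurableSet.univ.diff (h.measurableSet.compl.prod h.measurableSet.compl)

lemma frKer_meas {N : ℕ} {s : ℝ} {u v : Rn N → ℝ} (hu : Measurable u) (hv : Measurable v) :
    Measurable (frKer N s u v) := by
  unfold frKer
  fun_prop

lemma frKer_int {N : ℕ} {s : ℝ} {Ω S1 : Set (Rn N)} {u v : Rn N → ℝ}
    (hu : MemE N s Ω S1 u) (hv : MemE N s Ω S1 v) :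
    IntegrableOn (frKer N s u v) (Qset N Ω) := by
  refine Integrable.mono' (hu.2.2.2.add hv.2.2.2)
    (frKer_meas hu.1 hv.1).aestronglyMeasurable (Filter.Eventually.of_forall fun p => ?_)
  simp only [Pi.add_apply, frKer, Real.norm_eq_abs, abs_div, abs_mul]
  have hk : 0 ≤ ‖p.1 - p.2‖ ^ ((N : ℝ) + 2 * s) := by positivity
  rw [abs_of_nonneg hk, ← add_div]
  refine div_le_div_of_nonneg_right ?_ hk
  have h1 := abs_mul_abs_self (u p.1 - u p.2)
  have h2 := abs_mul_abs_self (v p.1 - v p.2)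
  nlinarith [sq_nonneg (|u p.1 - u p.2| - |v p.1 - v p.2|), abs_nonneg (u p.1 - u p.2),
    abs_nonneg (v p.1 - v p.2)]

lemma prod_int {N : ℕ} {s : ℝ} {Ω S1 : Set (Rn N)} {u v : Rn N → ℝ}
    (hu : MemE N s Ω S1 u) (hv : MemE N s Ω S1 v) :
    IntegrableOn (fun x => u x * v x) Ω := by
  refine Integrable.mono' (hu.2.2.1.add hv.2.2.1)
    (hu.1.mul hv.1).aestronglyMeasurable (Filter.Eventually.of_forall fun p => ?_)
  simp only [Pi.add_apply, Real.norm_eq_abs, abs_mul]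
  nlinarith [sq_nonneg (|u p| - |v p|), sq_abs (u p), sq_abs (v p), sq_nonneg (u p),
    sq_nonneg (v p)]

lemma mem_int {N : ℕ} {s : ℝ} {Ω S1 : Set (Rn N)} {u : Rn N → ℝ}
    (hb : Bornology.IsBounded Ω) (hu : MemE N s Ω S1 u) :
    IntegrableOn u Ω := by
  have h1 : IntegrableOn (fun _ : Rn N => (1 : ℝ)) Ω :=
    integrableOn_const hb.measure_lt_top.ne
  refine Integrable.mono' (h1.add hu.2.2.1)
    hu.1.aestronglyMeasurable (Filter.Eventually.of_forall fun p => ?_)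
  simp only [Pi.add_apply, Real.norm_eq_abs]
  nlinarith [sq_nonneg (|u p| - 1), sq_abs (u p), sq_nonneg (u p)]

lemma MemE_of_bound {N : ℕ} {s : ℝ} {Ω S1 : Set (Rn N)} {u v φ : Rn N → ℝ} {C : ℝ}
    (hu : MemE N s Ω S1 u) (hv : MemE N s Ω S1 v) (hφ : Measurable φ)
    (h1 : ∀ x, |φ x| ≤ C * (|u x| + |v x|))
    (h2 : ∀ x y, |φ x - φ y| ≤ C * (|u x - u y| + |v x - v y|)) :
    MemE N s Ω S1 φ := by
  have key : ∀ a b c : ℝ, |a| ≤ C * (|b| + |c|) → a ^ 2 ≤ (2 * C ^ 2) * (b ^ 2 + c ^ 2) := by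
    intro a b c h
    have h3 : |a| ^ 2 ≤ (C * (|b| + |c|)) ^ 2 := pow_le_pow_left₀ (abs_nonneg a) h 2
    rw [sq_abs] at h3
    have h4 : (|b| + |c|) ^ 2 ≤ 2 * (b ^ 2 + c ^ 2) := by
      nlinarith [sq_nonneg (|b| - |c|), sq_abs b, sq_abs c]
    calc a ^ 2 ≤ C ^ 2 * (|b| + |c|) ^ 2 := by rw [← mul_pow]; exact h3
      _ ≤ C ^ 2 * (2 * (b ^ 2 + c ^ 2)) := by gcongr
      _ = _ := by ring
  refine ⟨hφ, ?_, ?_, ?_⟩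
  · filter_upwards [hu.2.1, hv.2.1] with x hx hy hS
    have := h1 x
    rw [hx hS, hy hS] at this
    simpa using this
  · refine Integrable.mono' ((hu.2.2.1.add hv.2.2.1).const_mul (2 * C ^ 2))
      (hφ.pow_const 2).aestronglyMeasurable (Filter.Eventually.of_forall fun p => ?_)
    rw [Real.norm_eq_abs, abs_of_nonneg (sq_nonneg _)]
    exact key _ _ _ (h1 p)
  · refine Integrable.mono' ((hu.2.2.2.add hv.2.2.2).const_mul (2 * C ^ 2))
      (frKer_meas hφ hφ).aestronglyMeasurable (Filter.Eventually.of_forall fun p => ?_)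
    have hk : 0 ≤ ‖p.1 - p.2‖ ^ ((N : ℝ) + 2 * s) := by positivity
    have h3 := key _ _ _ (h2 p.1 p.2)
    simp only [Pi.add_apply, frKer, Real.norm_eq_abs, abs_div, abs_of_nonneg hk, ← sq]
    rw [abs_of_nonneg (sq_nonneg _), ← add_div, ← mul_div_assoc]
    exact div_le_div_of_nonneg_right h3 hk

/-- zero energy implies vanishing -/
lemma zero_of_energy {N : ℕ} {s : ℝ} {Ω S1 : Set (Rn N)} {φ : Rn N → ℝ}
    (hΩo : IsOpen Ω) (hd : ∀ x ∈ Ω, x ∉ S1) (hS1o : IsOpen S1) (hS1m : 0 < volume S1)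
    (hφ : MemE N s Ω S1 φ) (hE : ∫ p in Qset N Ω, frKer N s φ φ p ≤ 0) :
    ∀ᵐ x : Rn N, x ∈ Ω → φ x = 0 := by
  have hnn : ∀ p, 0 ≤ frKer N s φ φ p := fun p => by
    unfold frKer
    exact div_nonneg (mul_self_nonneg _) (by positivity)
  have h0 : ∫ p in Qset N Ω, frKer N s φ φ p = 0 :=
    le_antisymm hE (integral_nonneg hnn)
  rw [integral_eq_zero_iff_of_nonneg hnn hφ.2.2.2] at h0
  have h1 := (ae_restrict_iff' (Qset_meas hΩo)).1 h0
  have h2 := Measure.ae_ae_of_ae_prod h1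
  filter_upwards [h2] with x hx hxΩ
  by_contra hne
  have h3 : ∀ᵐ y : Rn N, y ∉ S1 := by
    filter_upwards [hx, hφ.2.1] with y hy hy0 hyS
    have h4 := hy (by simp [Qset, hxΩ])
    have h5 : x - y ≠ 0 := by
      intro h
      exact hd x hxΩ (by rwa [sub_eq_zero.1 h])
    have h6 : 0 < ‖x - y‖ ^ ((N : ℝ) + 2 * s) := Real.rpow_pos_of_pos (norm_pos_iff.2 h5) _
    simp only [frKer, hy0 hyS, Pi.zero_apply, sub_zero] at h4
    have : 0 < φ x * φ x / ‖x - y‖ ^ ((N : ℝ) + 2 * s) :=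
      div_pos (mul_self_pos.2 hne) h6
    exact this.ne' h4
  have := measure_eq_zero_iff_ae_notMem.2 h3
  exact hS1m.ne' this

/-- weak comparison principle -/
lemma comparison {N : ℕ} {s : ℝ} {Ω S1 : Set (Rn N)} {w : Rn N → ℝ}
    (hΩo : IsOpen Ω) (hd : ∀ x ∈ Ω, x ∉ S1) (hS1o : IsOpen S1) (hS1m : 0 < volume S1)
    (hw : MemE N s Ω S1 w)
    (h : ∀ φ, MemE N s Ω S1 φ → (∀ x, 0 ≤ φ x) → (∀ x, φ x ≤ 1) →
      ∫ p in Qset N Ω, frKer N s w φ p ≤ 0) :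
    ∀ᵐ x : Rn N, x ∈ Ω → w x ≤ 0 := by
  set φ : Rn N → ℝ := fun x => min (max (w x) 0) 1 with hφdef
  have hm : Measurable φ := (hw.1.max measurable_const).min measurable_const
  have hlip : ∀ a b : ℝ, |min (max a 0) 1 - min (max b 0) 1| ≤ |a - b| := fun a b =>
    (abs_min_sub_min_le_max _ _ _ _).trans (by
      simpa using (abs_max_sub_max_le_max a 0 b 0))
  have hφ : MemE N s Ω S1 φ := by
    refine MemE_of_bound (C := 1) hw hw hm (fun x => ?_) (fun x y => ?_)
    · have := hlip (w x) 0
      simp only [max_self, sub_zero, hφdef] at this ⊢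
      rw [min_eq_left (zero_le_one' ℝ), sub_zero] at this
      linarith [abs_nonneg (w x)]
    · have := hlip (w x) (w y)
      simp only [hφdef]
      linarith [abs_nonneg (w x - w y)]
  have h1 := h φ hφ (fun x => by simp [hφdef]) (fun x => by simp [hφdef])
  have h2 : ∫ p in Qset N Ω, frKer N s φ φ p ≤ 0 := by
    refine le_trans (integral_mono hφ.2.2.2 (frKer_int hw hφ) fun p => ?_) h1
    unfold frKer
    refine div_le_div_of_nonneg_right ?_ (by positivity)
    simp only [hφdef]
    rcases le_total (w p.1) 0 with h3 | h3 <;> rcases le_total (w p.2) 0 with h4 | h4 <;>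
    rcases le_total (w p.1) 1 with h5 | h5 <;> rcases le_total (w p.2) 1 with h6 | h6 <;>
    simp [h3, h4, h5, h6] <;> nlinarith
  filter_upwards [zero_of_energy hΩo hd hS1o hS1m hφ h2] with x hx hxΩ
  have := hx hxΩ
  simp only [hφdef] at this
  by_contra hc
  push Not at hc
  have : 0 < min (max (w x) 0) 1 := by simp [hc]
  linarith

/-- There is a level `K` such that every small ball centred in `Ω` is half filled by `u ≤ K`. -/
lemma exists_level {N : ℕ} {Ω : Set (Rn N)} {u : Rn N → ℝ} (hu : Measurable u)
    (hb : Bornology.IsBounded Ω) {r : ℝ} (hr0 : 0 < r) {m : ℝ} (hm : 0 < m) :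
    ∃ K : ℝ, 0 < K ∧ ∀ x ∈ Ω,
      volume.real (Metric.ball x r) - m ≤ volume.real (Metric.ball x r ∩ {y | u y ≤ K}) := by
  have hBb : Bornology.IsBounded (Metric.cthickening r Ω) := hb.cthickening
  have hBfin : volume (Metric.cthickening r Ω) ≠ ⊤ := hBb.measure_lt_top.ne
  set A : ℕ → Set (Rn N) := fun n => Metric.cthickening r Ω ∩ {y | (n : ℝ) < u y} with hA
  have hAm : ∀ n, MeasurableSet (A n) := fun n =>
    Metric.isClosed_cthickening.measurableSet.inter (measurableSet_lt measurable_const hu)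
  have hlim := tendsto_measure_iInter_atTop (μ := (volume : Measure (Rn N))) (s := A)
    (fun n => (hAm n).nullMeasurableSet)
    (fun i j hij y hy => ⟨hy.1, lt_of_le_of_lt (Nat.cast_le.2 hij : (i : ℝ) ≤ j) hy.2⟩)
    ⟨0, ((measure_mono inter_subset_left).trans_lt hBb.measure_lt_top).ne⟩
  have hemp : ⋂ n, A n = ∅ := by
    ext y
    simp only [mem_iInter, mem_empty_iff_false, iff_false, not_forall]
    obtain ⟨n, hn⟩ := exists_nat_ge (u y)
    exact ⟨n, fun h => absurd h.2 (not_lt.2 hn)⟩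
  rw [hemp, measure_empty] at hlim
  obtain ⟨n, hn⟩ := (hlim.eventually (gt_mem_nhds (ENNReal.ofReal_pos.2 hm))).exists
  refine ⟨n + 1, by positivity, fun x hx => ?_⟩
  have hsub : Metric.ball x r ⊆ (Metric.ball x r ∩ {y | u y ≤ n + 1}) ∪ A n := by
    intro y hy
    by_cases h : u y ≤ n + 1
    · exact Or.inl ⟨hy, h⟩
    · refine Or.inr ⟨?_, ?_⟩
      · exact Metric.mem_cthickening_of_dist_le y x r Ω hx (Metric.mem_ball.1 hy).le
      · simp only [mem_setOf_eq]; push Not at h; linarith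
  have hfin2 : volume (A n) ≠ ⊤ :=
    ((measure_mono inter_subset_left).trans_lt hBb.measure_lt_top).ne
  have hfin1 : volume (Metric.ball x r ∩ {y | u y ≤ n + 1}) ≠ ⊤ :=
    ((measure_mono inter_subset_left).trans_lt Metric.isBounded_ball.measure_lt_top).ne
  have h1 := (measureReal_mono (μ := volume) hsub (measure_union_ne_top hfin1 hfin2)).trans
    (measureReal_union_le _ _)
  have h2 : volume.real (A n) ≤ m := ENNReal.toReal_le_of_le_ofReal hm.le hn.le
  linarith

/-- One-step `L^∞` bound for eigenfunctions. -/
lemma eigen_bounded {N : ℕ} {s a lam : ℝ} (hs0 : 0 < s) (ha : 0 < a) (hlam : 0 ≤ lam)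
    {Ω S1 : Set (Rn N)} (hΩo : IsOpen Ω) (hΩb : Bornology.IsBounded Ω)
    {u : Rn N → ℝ} (hu : MemE N s Ω S1 u)
    (he : ∀ φ : Rn N → ℝ, MemE N s Ω S1 φ →
      (a / 2) * ∫ p in Qset N Ω, frKer N s u φ p = lam * ∫ x in Ω, u x * φ x) :
    ∃ M : ℝ, 0 < M ∧ ∀ᵐ x : Rn N, x ∈ Ω → u x ≤ M := by
  set q : ℝ := (N : ℝ) + 2 * s with hq
  have hqpos : 0 < q := by positivity
  set v1 : ℝ := volume.real (Metric.ball (0 : Rn N) 1) with hv1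
  have hv1pos : 0 < v1 := ENNReal.toReal_pos (Metric.measure_ball_pos _ _ one_pos).ne'
    Metric.isBounded_ball.measure_lt_top.ne
  set T : ℝ := 8 * (lam + 1) / (a * v1) with hT
  have hTpos : 0 < T := by positivity
  set r : ℝ := T ^ (-(1 / (2 * s))) with hr
  have hrpos : 0 < r := Real.rpow_pos_of_pos hTpos _
  have hrq : 0 < r ^ q := Real.rpow_pos_of_pos hrpos _
  have hrT : r ^ N / r ^ q = T := by
    rw [← Real.rpow_natCast, ← Real.rpow_sub hrpos, hr, ← Real.rpow_mul hTpos.le]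
    have : -(1 / (2 * s)) * ((N : ℝ) - q) = 1 := by rw [hq]; field_simp; ring
    rw [this, Real.rpow_one]
  have hball : ∀ x : Rn N, volume.real (Metric.ball x r) = r ^ N * v1 := by
    intro x
    rw [hv1, Measure.real, Measure.addHaar_ball_of_pos _ _ hrpos, ENNReal.toReal_mul,
      ENNReal.toReal_ofReal (by positivity), Measure.real]
    simp
  obtain ⟨K, hK, hKx⟩ := exists_level hu.1 hΩb hrpos (m := r ^ N * v1 / 2) (by positivity)
  set φ : Rn N → ℝ := fun x => max (u x - 2 * K) 0 with hφdef
  have hφm : Measurable φ := (hu.1.sub measurable_const).max measurable_const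
  have hφ0 : ∀ x, 0 ≤ φ x := fun x => le_max_right _ _
  have hφ : MemE N s Ω S1 φ := by
    refine MemE_of_bound (C := 1) hu hu hφm (fun x => ?_) (fun x y => ?_)
    · rw [abs_of_nonneg (hφ0 x)]
      refine max_le ?_ (by positivity)
      linarith [le_abs_self (u x), abs_nonneg (u x)]
    · have := abs_max_sub_max_le_max (u x - 2 * K) 0 (u y - 2 * K) 0
      simp only [sub_sub_sub_cancel_right, sub_self, abs_zero] at this
      rw [max_eq_left (abs_nonneg (u x - u y))] at this
      simp only [hφdef]
      linarith [abs_nonneg (u x - u y)]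
  have huφ : ∀ x, 0 ≤ u x * φ x := by
    intro x
    rcases le_total (u x) (2 * K) with h | h
    · have : φ x = 0 := max_eq_right (by linarith)
      simp [this]
    · exact mul_nonneg (by linarith) (hφ0 x)
  set S : Set (Rn N × Rn N) := {p | p.1 ∈ Ω ∧ dist p.2 p.1 < r ∧ u p.2 ≤ K} with hS
  have hSm : MeasurableSet S := by
    refine (measurable_fst hΩo.measurableSet).inter (MeasurableSet.inter ?_ ?_)
    · exact measurableSet_lt (measurable_snd.dist measurable_fst) measurable_const
    · exact measurableSet_le (hu.1.comp measurable_snd) measurable_const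
  set G : Rn N × Rn N → ℝ := fun p => u p.1 * φ p.1 / 2 / r ^ q with hG
  have hGm : Measurable G :=
    (((hu.1.comp measurable_fst).mul (hφm.comp measurable_fst)).div_const _).div_const _
  have hG0 : ∀ p, 0 ≤ G p := fun p =>
    div_nonneg (div_nonneg (huφ _) (by norm_num)) hrq.le
  set F := S.indicator G with hF
  have hF0 : ∀ p, 0 ≤ F p := fun p => indicator_nonneg (fun p _ => hG0 p) p
  have hker0 : ∀ p, 0 ≤ frKer N s u φ p := by
    intro p
    unfold frKer
    refine div_nonneg ?_ (by positivity)
    simp only [hφdef]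
    rcases le_total (u p.1 - 2 * K) 0 with h3 | h3 <;>
    rcases le_total (u p.2 - 2 * K) 0 with h4 | h4 <;>
    simp only [max_eq_left, max_eq_right, h3, h4] <;>
    nlinarith [mul_self_nonneg (u p.1 - u p.2)]
  have hFle : ∀ p, F p ≤ frKer N s u φ p := by
    intro p
    by_cases hp : p ∈ S
    · rw [hF, indicator_of_mem hp]
      obtain ⟨h1, h2, h3⟩ := hp
      rcases le_total (u p.1) (2 * K) with h | h
      · have : φ p.1 = 0 := max_eq_right (by linarith)
        simp only [hG, this, mul_zero, zero_div]
        exact hker0 p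
      · have hφ2 : φ p.2 = 0 := max_eq_right (by linarith)
        have hne : p.1 - p.2 ≠ 0 := by
          intro h0
          rw [sub_eq_zero.1 h0] at h
          linarith
        have hn : 0 < ‖p.1 - p.2‖ := norm_pos_iff.2 hne
        have hnr : ‖p.1 - p.2‖ ≤ r := by
          rw [← dist_eq_norm, dist_comm]; exact h2.le
        have hpw : ‖p.1 - p.2‖ ^ q ≤ r ^ q := Real.rpow_le_rpow hn.le hnr hqpos.le
        have hpw0 : 0 < ‖p.1 - p.2‖ ^ q := Real.rpow_pos_of_pos hn _
        simp only [hG, frKer, hφ2, sub_zero]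
        refine div_le_div₀ (mul_nonneg (by linarith) (hφ0 _)) ?_ hpw0 hpw
        nlinarith [hφ0 p.1]
    · rw [hF, indicator_of_notMem hp]
      exact hker0 p
  have hFout : ∀ p, p ∉ Qset N Ω → F p = 0 := by
    intro p hp
    refine indicator_of_notMem (fun h => hp ?_) _
    simp [Qset, h.1]
  have hFintQ : IntegrableOn F (Qset N Ω) := by
    refine Integrable.mono' (frKer_int hu hφ) (hGm.indicator hSm).aestronglyMeasurable
      (Filter.Eventually.of_forall fun p => ?_)
    rw [Real.norm_eq_abs, abs_of_nonneg (hF0 p)]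
    exact hFle p
  have hFint : Integrable F := by
    rw [← integrableOn_iff_integrable_of_support_subset (s := Qset N Ω)]
    · exact hFintQ
    · intro p hp
      by_contra h
      exact hp (hFout p h)
  have h1 : ∫ p, F p ≤ ∫ p in Qset N Ω, frKer N s u φ p := by
    rw [← setIntegral_eq_integral_of_forall_compl_eq_zero hFout]
    exact integral_mono hFintQ (frKer_int hu hφ) hFle
  have hFint' : Integrable F ((volume : Measure (Rn N)).prod volume) := hFint
  have h2 : ∫ p, F p = ∫ x, ∫ y, F (x, y) := integral_prod F hFint'
  have huφint : IntegrableOn (fun x => u x * φ x) Ω := prod_int hu hφ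
  have h3 : ∫ x, Ω.indicator (fun x => (T * v1 / 4) * (u x * φ x)) x ≤ ∫ x, ∫ y, F (x, y) := by
    refine integral_mono ((integrable_indicator_iff hΩo.measurableSet).2 (huφint.const_mul _))
      hFint'.integral_prod_left fun x => ?_
    by_cases hx : x ∈ Ω
    · simp only [indicator_of_mem hx]
      have h4 : ∀ y, F (x, y) =
          (Metric.ball x r ∩ {y | u y ≤ K}).indicator (fun _ => u x * φ x / 2 / r ^ q) y := by
        intro y
        by_cases hy : y ∈ Metric.ball x r ∩ {y | u y ≤ K}
        · rw [indicator_of_mem hy, hF, indicator_of_mem]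
          exact ⟨hx, hy.1, hy.2⟩
        · rw [indicator_of_notMem hy, hF, indicator_of_notMem]
          exact fun h => hy ⟨h.2.1, h.2.2⟩
      simp_rw [h4]
      rw [integral_indicator (Metric.isOpen_ball.measurableSet.inter
        (measurableSet_le hu.1 measurable_const)), setIntegral_const, smul_eq_mul]
      have h5 := hKx x hx
      rw [hball] at h5
      have h6 : T * v1 / 4 * (u x * φ x) = (r ^ N * v1 / 2) * (u x * φ x / 2 / r ^ q) := by
        rw [← hrT]; ring
      rw [h6]
      exact mul_le_mul_of_nonneg_right (by linarith) (hG0 (x, x))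
    · simp only [indicator_of_notMem hx]
      exact integral_nonneg fun y => hF0 _
  rw [integral_indicator hΩo.measurableSet, integral_const_mul] at h3
  have h7 := he φ hφ
  set I := ∫ x in Ω, u x * φ x with hI
  have hI0 : 0 ≤ I := integral_nonneg huφ
  have h8 : (a / 2) * (T * v1 / 4 * I) ≤ lam * I := by
    rw [← h7]
    exact mul_le_mul_of_nonneg_left (h3.trans (h2 ▸ h1)) (by positivity)
  have h9 : (a / 2) * (T * v1 / 4 * I) = (lam + 1) * I := by
    rw [hT]; field_simp; ring
  have hIz : I = 0 := by nlinarith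
  rw [hI, integral_eq_zero_iff_of_nonneg huφ huφint] at hIz
  refine ⟨2 * K, by positivity, ?_⟩
  filter_upwards [(ae_restrict_iff' hΩo.measurableSet).1 hIz] with x hx hxΩ
  by_contra hc
  push Not at hc
  have h10 := hx hxΩ
  have h11 : φ x = u x - 2 * K := max_eq_left (by linarith)
  simp only [Pi.zero_apply, h11] at h10
  nlinarith [mul_pos (show 0 < u x by linarith) (show 0 < u x - 2 * K by linarith)]

/-- truncated slope -/
def hfun (t r : ℝ) : ℝ := min (max (r - t) 0) 1

/-- convex function with slope `hfun` -/
def gfun (t r : ℝ) : ℝ := hfun t r * (r - t) - hfun t r ^ 2 / 2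

lemma hfun_nonneg (t r : ℝ) : 0 ≤ hfun t r := by simp [hfun]

lemma hfun_le_one (t r : ℝ) : hfun t r ≤ 1 := by simp [hfun]

lemma hfun_lip (t a b : ℝ) : |hfun t a - hfun t b| ≤ |a - b| := by
  unfold hfun
  refine (abs_min_sub_min_le_max _ _ _ _).trans ?_
  simpa using (abs_max_sub_max_le_max (a - t) 0 (b - t) 0)

lemma hfun_zero {t r : ℝ} (h : r ≤ t) : hfun t r = 0 := by
  unfold hfun
  rw [max_eq_right (by linarith)]
  simp

lemma gfun_zero {t r : ℝ} (h : r ≤ t) : gfun t r = 0 := by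
  simp [gfun, hfun_zero h]

lemma gfun_ge {t a m : ℝ} (h0 : 0 ≤ m) (h1 : m ≤ 1) : m * (a - t) - m ^ 2 / 2 ≤ gfun t a := by
  rcases le_total a t with h | h
  · rw [gfun_zero h]
    nlinarith [mul_nonneg h0 (sub_nonneg.2 h), sq_nonneg m]
  · unfold gfun hfun
    rw [max_eq_left (by linarith)]
    rcases le_total (a - t) 1 with h2 | h2
    · rw [min_eq_left h2]
      nlinarith [sq_nonneg (a - t - m)]
    · rw [min_eq_right h2]
      nlinarith [mul_nonneg (sub_nonneg.2 h1) (sub_nonneg.2 h2), sq_nonneg (1 - m)]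

lemma gfun_conv (t a b : ℝ) : gfun t b + hfun t b * (a - b) ≤ gfun t a := by
  have := gfun_ge (t := t) (a := a) (hfun_nonneg t b) (hfun_le_one t b)
  unfold gfun at this ⊢
  linarith

lemma gfun_nonneg (t r : ℝ) : 0 ≤ gfun t r := by
  have := gfun_ge (t := t) (a := r) le_rfl zero_le_one
  simpa using this

lemma gfun_pos {t r : ℝ} (h : t < r) : 0 < gfun t r := by
  have h0 : 0 < hfun t r := by unfold hfun; simp [h]
  have h1 : hfun t r ≤ r - t := by
    unfold hfun
    rw [max_eq_left (by linarith)]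
    exact min_le_left _ _
  unfold gfun
  nlinarith

lemma gfun_lip (t a b : ℝ) : |gfun t a - gfun t b| ≤ |a - b| := by
  have key : ∀ a b, gfun t a - gfun t b ≤ |a - b| := by
    intro a b
    have h1 := gfun_conv t b a
    have h2 : hfun t a * (a - b) ≤ |a - b| :=
      calc hfun t a * (a - b) ≤ hfun t a * |a - b| :=
            mul_le_mul_of_nonneg_left (le_abs_self _) (hfun_nonneg _ _)
        _ ≤ 1 * |a - b| := mul_le_mul_of_nonneg_right (hfun_le_one _ _) (abs_nonneg _)
        _ = |a - b| := one_mul _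
    linarith
  rw [abs_le]
  have := key a b
  have h2 := key b a
  rw [abs_sub_comm] at h2
  constructor <;> linarith

lemma hfun_meas (t : ℝ) : Measurable (hfun t) := by
  unfold hfun
  fun_prop

lemma gfun_meas (t : ℝ) : Measurable (gfun t) := by
  unfold gfun
  have := hfun_meas t
  fun_prop

lemma MemE_lin {N : ℕ} {s : ℝ} {Ω S1 : Set (Rn N)} {u v : Rn N → ℝ} (α β : ℝ)
    (hu : MemE N s Ω S1 u) (hv : MemE N s Ω S1 v) :
    MemE N s Ω S1 (fun x => α * u x + β * v x) := by
  have key : ∀ a b : ℝ, |α * a + β * b| ≤ (|α| + |β|) * (|a| + |b|) := by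
    intro a b
    refine (abs_add_le _ _).trans ?_
    rw [abs_mul, abs_mul]
    nlinarith [mul_nonneg (abs_nonneg α) (abs_nonneg b), mul_nonneg (abs_nonneg β) (abs_nonneg a)]
  refine MemE_of_bound hu hv ((hu.1.const_mul α).add (hv.1.const_mul β)) (fun x => key _ _)
    fun x y => ?_
  have := key (u x - u y) (v x - v y)
  rwa [show α * u x + β * v x - (α * u y + β * v y)
    = α * (u x - u y) + β * (v x - v y) by ring]

lemma frKer_lin {N : ℕ} {s : ℝ} {Ω S1 : Set (Rn N)} {u v φ : Rn N → ℝ} (α β : ℝ)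
    (hu : MemE N s Ω S1 u) (hv : MemE N s Ω S1 v) (hφ : MemE N s Ω S1 φ) :
    ∫ p in Qset N Ω, frKer N s (fun x => α * u x + β * v x) φ p
      = α * (∫ p in Qset N Ω, frKer N s u φ p) + β * ∫ p in Qset N Ω, frKer N s v φ p := by
  rw [← integral_const_mul, ← integral_const_mul, ← integral_add
    ((frKer_int hu hφ).const_mul α) ((frKer_int hv hφ).const_mul β)]
  congr 1
  ext p
  unfold frKer
  ring

lemma upper_bound {N : ℕ} {s a lam : ℝ} (hs0 : 0 < s) (ha : 0 < a) (hlam : 0 < lam)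
    {Ω S1 : Set (Rn N)} (hΩo : IsOpen Ω) (hΩb : Bornology.IsBounded Ω)
    (hd : ∀ x ∈ Ω, x ∉ S1) (hS1o : IsOpen S1) (hS1m : 0 < volume S1)
    {u ξ : Rn N → ℝ} (hu : MemE N s Ω S1 u)
    (he : ∀ φ : Rn N → ℝ, MemE N s Ω S1 φ →
      (a / 2) * ∫ p in Qset N Ω, frKer N s u φ p = lam * ∫ x in Ω, u x * φ x)
    (hξ : IsWeakSolMixed N s a Ω S1 (fun _ => 1) ξ) :
    ∃ C : ℝ, 0 < C ∧ ∀ᵐ x : Rn N, x ∈ Ω → u x ≤ C * ξ x := by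
  obtain ⟨M, hM, hbd⟩ := eigen_bounded hs0 ha hlam.le hΩo hΩb hu he
  refine ⟨lam * M, by positivity, ?_⟩
  have hw := MemE_lin 1 (-(lam * M)) hu hξ.1
  have := comparison hΩo hd hS1o hS1m hw (fun φ hφ h0 h1 => ?_)
  · filter_upwards [this] with x hx hxΩ
    have := hx hxΩ
    linarith
  · rw [frKer_lin _ _ hu hξ.1 hφ]
    have e1 := he φ hφ
    have e2 := hξ.2 φ hφ
    simp only [one_mul] at e2
    have h3 : ∫ x in Ω, u x * φ x ≤ ∫ x in Ω, M * φ x := by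
      refine integral_mono_ae (prod_int hu hφ) ((mem_int hΩb hφ).const_mul M) ?_
      refine (ae_restrict_iff' hΩo.measurableSet).2 ?_
      filter_upwards [hbd] with x hx hxΩ
      exact mul_le_mul_of_nonneg_right (hx hxΩ) (h0 x)
    rw [integral_const_mul] at h3
    set A := ∫ p in Qset N Ω, frKer N s u φ p
    set B := ∫ p in Qset N Ω, frKer N s ξ φ p
    have h4 : (a / 2) * (1 * A + -(lam * M) * B) ≤ 0 := by
      have : (a / 2) * (1 * A + -(lam * M) * B) = a / 2 * A - lam * M * (a / 2 * B) := by ring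
      rw [this, e1, e2]
      nlinarith
    by_contra hc
    push Not at hc
    have := mul_pos (half_pos ha) hc
    linarith

lemma lower_bound {N : ℕ} {s a lam : ℝ} (hs0 : 0 < s) (ha : 0 < a) (hlam : 0 < lam)
    {Ω S1 : Set (Rn N)} (hΩo : IsOpen Ω) (hΩb : Bornology.IsBounded Ω) (hΩn : Ω.Nonempty)
    (hd : ∀ x ∈ Ω, x ∉ S1) (hS1o : IsOpen S1) (hS1m : 0 < volume S1)
    {u ξ : Rn N → ℝ} (hu : MemE N s Ω S1 u)
    (hpos : ∀ᵐ x : Rn N, x ∈ Ω → 0 < u x)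
    (he : ∀ φ : Rn N → ℝ, MemE N s Ω S1 φ →
      (a / 2) * ∫ p in Qset N Ω, frKer N s u φ p = lam * ∫ x in Ω, u x * φ x)
    (hξ : IsWeakSolMixed N s a Ω S1 (fun _ => 1) ξ) :
    ∃ C : ℝ, 0 < C ∧ ∀ᵐ x : Rn N, x ∈ Ω → ξ x ≤ C * u x := by
  have hΩpos : 0 < volume Ω := hΩo.measure_pos _ hΩn
  obtain ⟨t, ht, htm⟩ : ∃ t : ℝ, 0 < t ∧ ¬ (∀ᵐ x : Rn N, x ∈ Ω → u x ≤ t) := by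
    by_contra hc
    push Not at hc
    have h1 : ∀ᵐ x : Rn N, ∀ n : ℕ, x ∈ Ω → u x ≤ 1 / ((n : ℝ) + 1) :=
      ae_all_iff.2 fun n => hc _ (by positivity)
    have h2 : ∀ᵐ x : Rn N, x ∉ Ω := by
      filter_upwards [h1, hpos] with x hx hx0 hxΩ
      obtain ⟨n, hn⟩ := exists_nat_one_div_lt (hx0 hxΩ)
      linarith [hx n hxΩ]
    exact hΩpos.ne' (measure_eq_zero_iff_ae_notMem.2 h2)
  set q : ℝ := (N : ℝ) + 2 * s with hq
  have hqpos : 0 < q := by positivity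
  set g : Rn N → ℝ := fun x => gfun t (u x) with hgdef
  have hg : MemE N s Ω S1 g := by
    refine MemE_of_bound (C := 1) hu hu ((gfun_meas t).comp hu.1) (fun x => ?_) (fun x y => ?_)
    · have := gfun_lip t (u x) 0
      rw [gfun_zero ht.le, sub_zero, sub_zero] at this
      simp only [hgdef]
      linarith [abs_nonneg (u x)]
    · have := gfun_lip t (u x) (u y)
      simp only [hgdef]
      linarith [abs_nonneg (u x - u y)]
  have hg0 : ∀ x, 0 ≤ g x := fun x => gfun_nonneg _ _
  have hgint := mem_int hΩb hg
  have hgI : 0 < ∫ x in Ω, g x := by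
    refine lt_of_le_of_ne (integral_nonneg hg0) fun h => htm ?_
    rw [eq_comm, integral_eq_zero_iff_of_nonneg hg0 hgint] at h
    filter_upwards [(ae_restrict_iff' hΩo.measurableSet).1 h] with x hx hxΩ
    by_contra hc
    push Not at hc
    exact (gfun_pos hc).ne' (hx hxΩ)
  set gI := ∫ x in Ω, g x with hgIdef
  obtain ⟨D, hD, hDx⟩ : ∃ D : ℝ, 0 < D ∧ ∀ x ∈ Ω, ∀ y ∈ Ω, ‖x - y‖ ≤ D := by
    refine ⟨Metric.diam Ω + 1, by linarith [Metric.diam_nonneg (s := Ω)], fun x hx y hy => ?_⟩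
    rw [← dist_eq_norm]
    linarith [Metric.dist_le_diam_of_mem hΩb hx hy]
  have hDq : 0 < D ^ q := Real.rpow_pos_of_pos hD _
  set c : ℝ := (a / 2) * (gI / D ^ q) with hc
  have hcpos : 0 < c := by positivity
  set M : ℝ := 1 + c / (t * lam) with hM
  have hMpos : 0 < M := by positivity
  have hw := MemE_lin c 1 hξ.1 (MemE_lin 1 (-M) hg hu)
  have hcomp := comparison hΩo hd hS1o hS1m hw (fun φ hφ h0 h1 => ?_)
  · refine ⟨M / c, by positivity, ?_⟩
    filter_upwards [hcomp] with x hx hxΩ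
    have h3 := hx hxΩ
    have h4 := hg0 x
    rw [div_mul_eq_mul_div, le_div_iff₀ hcpos]
    linarith
  · rw [frKer_lin _ _ hξ.1 (MemE_lin 1 (-M) hg hu) hφ, frKer_lin _ _ hg hu hφ]
    set ψ : Rn N → ℝ := fun x => hfun t (u x) * φ x with hψdef
    have hψ : MemE N s Ω S1 ψ := by
      refine MemE_of_bound (C := 1) hu hφ (((hfun_meas t).comp hu.1).mul hφ.1)
        (fun x => ?_) (fun x y => ?_)
      · simp only [hψdef, abs_mul]
        rw [abs_of_nonneg (hfun_nonneg _ _)]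
        nlinarith [abs_nonneg (u x), mul_le_mul_of_nonneg_right (hfun_le_one t (u x))
          (abs_nonneg (φ x))]
      · have e : ψ x - ψ y = hfun t (u x) * (φ x - φ y)
            + (hfun t (u x) - hfun t (u y)) * φ y := by simp only [hψdef]; ring
        rw [e]
        refine (abs_add_le _ _).trans ?_
        rw [abs_mul, abs_mul, abs_of_nonneg (hfun_nonneg _ _), abs_of_nonneg (h0 y)]
        have e1 := mul_le_mul_of_nonneg_right (hfun_le_one t (u x)) (abs_nonneg (φ x - φ y))
        have e2 := mul_le_mul_of_nonneg_left (h1 y) (abs_nonneg (hfun t (u x) - hfun t (u y)))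
        have e3 := hfun_lip t (u x) (u y)
        linarith
    set f1 : Rn N → ℝ := {x | u x ≤ t}.indicator φ with hf1
    have hf1m : Measurable f1 := hφ.1.indicator (measurableSet_le hu.1 measurable_const)
    have hf10 : ∀ x, 0 ≤ f1 x := fun x => indicator_nonneg (fun x _ => h0 x) x
    have hf1int : IntegrableOn f1 Ω :=
      (mem_int hΩb hφ).indicator (measurableSet_le hu.1 measurable_const)
    set H : Rn N × Rn N → ℝ :=
      (Ω ×ˢ Ω).indicator (fun p => f1 p.1 * g p.2 / D ^ q) with hH
    have hsub : Ω ×ˢ Ω ⊆ Qset N Ω := by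
      intro p hp
      simp [Qset, hp.1]
    have hΩΩ : MeasurableSet (Ω ×ˢ Ω) := hΩo.measurableSet.prod hΩo.measurableSet
    have hHon : IntegrableOn (fun p : Rn N × Rn N => f1 p.1 * g p.2 / D ^ q) (Ω ×ˢ Ω) := by
      have := (Integrable.mul_prod hf1int hgint).div_const (D ^ q)
      rw [Measure.prod_restrict] at this
      exact this
    have hHint : IntegrableOn H (Qset N Ω) :=
      ((integrable_indicator_iff hΩΩ).2 hHon).integrableOn
    have hHI : ∫ p in Qset N Ω, H p = (∫ x in Ω, f1 x) * gI / D ^ q := by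
      rw [hH, setIntegral_indicator hΩΩ, inter_eq_self_of_subset_right hsub,
        integral_div]
      congr 1
      exact setIntegral_prod_mul f1 g Ω Ω
    have hpt : ∀ p, frKer N s g φ p ≤ frKer N s u ψ p - H p := by
      intro p
      have c1 := gfun_conv t (u p.1) (u p.2)
      have c2 := gfun_conv t (u p.2) (u p.1)
      have hnum : (g p.1 - g p.2) * (φ p.1 - φ p.2)
          ≤ (u p.1 - u p.2) * (ψ p.1 - ψ p.2) - f1 p.1 * g p.2 := by
        have d1 := mul_le_mul_of_nonneg_right c1 (h0 p.2)
        have d2 : g p.1 * φ p.1 ≤ g p.2 * φ p.1 +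
            hfun t (u p.1) * (u p.1 - u p.2) * φ p.1 - f1 p.1 * g p.2 := by
          by_cases hp : u p.1 ≤ t
          · have : f1 p.1 = φ p.1 := indicator_of_mem (s := {x | u x ≤ t}) hp φ
            rw [this, hfun_zero hp]
            simp only [hgdef, gfun_zero hp]
            linarith
          · have : f1 p.1 = 0 := indicator_of_notMem (s := {x | u x ≤ t}) hp φ
            rw [this]
            have := mul_le_mul_of_nonneg_right c2 (h0 p.1)
            simp only [hgdef]
            linarith
        simp only [hψdef, hgdef] at d1 d2 ⊢
        linarith
      have hk : 0 ≤ ‖p.1 - p.2‖ ^ q := by positivity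
      have hH2 : H p ≤ f1 p.1 * g p.2 / ‖p.1 - p.2‖ ^ q := by
        by_cases hp : p ∈ Ω ×ˢ Ω
        · rw [hH, indicator_of_mem hp]
          by_cases hne : p.1 = p.2
          · have : f1 p.1 * g p.2 = 0 := by
              rw [← hne]
              by_cases hp : u p.1 ≤ t
              · simp [hgdef, gfun_zero hp]
              · have : f1 p.1 = 0 := indicator_of_notMem (s := {x | u x ≤ t}) hp φ
                simp [this]
            simp [this]
          · have hn : 0 < ‖p.1 - p.2‖ := norm_pos_iff.2 (sub_ne_zero.2 hne)
            exact div_le_div_of_nonneg_left (mul_nonneg (hf10 _) (hg0 _))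
              (Real.rpow_pos_of_pos hn _)
              (Real.rpow_le_rpow hn.le (hDx _ hp.1 _ hp.2) hqpos.le)
        · rw [hH, indicator_of_notMem hp]
          exact div_nonneg (mul_nonneg (hf10 _) (hg0 _)) hk
      have h5 := div_le_div_of_nonneg_right hnum hk
      rw [sub_div] at h5
      unfold frKer
      linarith
    have hmain : ∫ p in Qset N Ω, frKer N s g φ p
        ≤ (∫ p in Qset N Ω, frKer N s u ψ p) - (∫ x in Ω, f1 x) * gI / D ^ q := by
      rw [← hHI, ← integral_sub (frKer_int hu hψ) hHint]
      exact integral_mono (frKer_int hg hφ) ((frKer_int hu hψ).sub hHint) hpt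
    have e1 := he φ hφ
    have e2 := hξ.2 φ hφ
    have e3 := he ψ hψ
    simp only [one_mul] at e2
    have hfin : c * (∫ x in Ω, φ x) + lam * (∫ x in Ω, u x * ψ x)
        ≤ (M * lam) * (∫ x in Ω, u x * φ x) + c * ∫ x in Ω, f1 x := by
      rw [← integral_const_mul, ← integral_const_mul, ← integral_const_mul, ← integral_const_mul,
        ← integral_add ((mem_int hΩb hφ).const_mul c) ((prod_int hu hψ).const_mul lam),
        ← integral_add ((prod_int hu hφ).const_mul (M * lam)) (hf1int.const_mul c)]
      refine integral_mono_ae (((mem_int hΩb hφ).const_mul c).add ((prod_int hu hψ).const_mul lam))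
        (((prod_int hu hφ).const_mul (M * lam)).add (hf1int.const_mul c)) ?_
      refine (ae_restrict_iff' hΩo.measurableSet).2 ?_
      filter_upwards [hpos] with x hx hxΩ
      have hux := hx hxΩ
      have hMl : M * lam = lam + c / t := by rw [hM]; field_simp
      simp only [hMl, hψdef]
      have k1 : lam * (u x * (hfun t (u x) * φ x)) ≤ lam * (u x * φ x) := by
        refine mul_le_mul_of_nonneg_left (mul_le_mul_of_nonneg_left ?_ hux.le) hlam.le
        nlinarith [mul_le_mul_of_nonneg_right (hfun_le_one t (u x)) (h0 x)]
      have k2 : c * φ x ≤ c / t * (u x * φ x) + c * f1 x := by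
        by_cases hp : u x ≤ t
        · have : f1 x = φ x := indicator_of_mem (s := {x | u x ≤ t}) hp φ
          rw [this]
          have : 0 ≤ c / t * (u x * φ x) :=
            mul_nonneg (by positivity) (mul_nonneg hux.le (h0 x))
          linarith
        · have : f1 x = 0 := indicator_of_notMem (s := {x | u x ≤ t}) hp φ
          rw [this]
          push Not at hp
          have k3 : c / t * (t * φ x) ≤ c / t * (u x * φ x) :=
            mul_le_mul_of_nonneg_left (mul_le_mul_of_nonneg_right hp.le (h0 x)) (by positivity)
          have k4 : c / t * (t * φ x) = c * φ x := by field_simp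
          linarith
      linarith
    set A := ∫ p in Qset N Ω, frKer N s ξ φ p
    set B := ∫ p in Qset N Ω, frKer N s g φ p
    set B' := ∫ p in Qset N Ω, frKer N s u ψ p
    set E := ∫ p in Qset N Ω, frKer N s u φ p
    have h6 := mul_le_mul_of_nonneg_left hmain (half_pos ha).le
    have h7 : a / 2 * (B' - (∫ x in Ω, f1 x) * gI / D ^ q)
        = a / 2 * B' - c * ∫ x in Ω, f1 x := by rw [hc]; ring
    rw [h7, e3] at h6
    have h8 : a / 2 * (c * A + 1 * (1 * B + -M * E)) ≤ 0 := by
      have : a / 2 * (c * A + 1 * (1 * B + -M * E))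
        = c * (a / 2 * A) + a / 2 * B - M * (a / 2 * E) := by ring
      rw [this, e1, e2]
      linarith
    by_contra hcc
    push Not at hcc
    have := mul_pos (half_pos ha) hcc
    linarith

/-- Comparison between the first eigenfunction χ₁ of the fractional Laplacian with
zero mixed boundary conditions and the solution ξ0 of the mixed problem with
right-hand side 1: C⁻¹ ξ0 ≤ χ₁ ≤ C ξ0 in Ω. -/
theorem eigenfunction_torsion_comparison
    {N : ℕ} (hN : 1 ≤ N) {s aNs : ℝ} (hs0 : 0 < s) (hs1 : s < 1) (haNs : 0 < aNs)
    {Ω S1 S2 : Set (Rn N)} (hΩo : IsOpen Ω) (hΩb : Bornology.IsBounded Ω)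
    (hΩc : IsConnected Ω)
    (hS1o : IsOpen S1) (hS2o : IsOpen S2)
    (hS1m : 0 < volume S1) (hS2m : 0 < volume S2)
    (hdisj : Disjoint S1 S2) (hcov : closure S1 ∪ closure S2 = Ωᶜ)
    (lam1 : ℝ)
    (hlam1 : lam1 = sInf { r : ℝ | ∃ w : Rn N → ℝ, MemE N s Ω S1 w ∧
      0 < ∫ x in Ω, (w x) ^ 2 ∧
      r = ((aNs / 2) * ∫ p in Qset N Ω, frKer N s w w p) / ∫ x in Ω, (w x) ^ 2 })
    (χ1 : Rn N → ℝ) (hχ1E : MemE N s Ω S1 χ1)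
    (hχ1_pos : ∀ᵐ x ∂(volume.restrict Ω), 0 < χ1 x)
    (hχ1_norm : (∫ x in Ω, (χ1 x) ^ 2) = 1)
    (hχ1_eigen : ∀ φ : Rn N → ℝ, MemE N s Ω S1 φ →
      (aNs / 2) * ∫ p in Qset N Ω, frKer N s χ1 φ p = lam1 * ∫ x in Ω, χ1 x * φ x)
    (ξ0 : Rn N → ℝ) (hξ0 : IsWeakSolMixed N s aNs Ω S1 (fun _ => 1) ξ0) :
    ∃ C : ℝ, 0 < C ∧
      ∀ᵐ x : Rn N, x ∈ Ω → C⁻¹ * ξ0 x ≤ χ1 x ∧ χ1 x ≤ C * ξ0 x := by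
  have hd : ∀ x ∈ Ω, x ∉ S1 := by
    intro x hx hxS
    have : x ∈ Ωᶜ := hcov ▸ Or.inl (subset_closure hxS)
    exact this hx
  have hpos : ∀ᵐ x : Rn N, x ∈ Ω → 0 < χ1 x :=
    (ae_restrict_iff' hΩo.measurableSet).1 hχ1_pos
  have hlam : 0 < lam1 := by
    have h1 := hχ1_eigen χ1 hχ1E
    have h2 : ∫ x in Ω, χ1 x * χ1 x = 1 := by
      rw [← hχ1_norm]; congr 1; ext x; ring
    rw [h2, mul_one] at h1
    by_contra hc
    push Not at hc
    have h3 : ∫ p in Qset N Ω, frKer N s χ1 χ1 p ≤ 0 := by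
      by_contra h4
      push Not at h4
      have := mul_pos (half_pos haNs) h4
      linarith
    have h5 := zero_of_energy hΩo hd hS1o hS1m hχ1E h3
    have h6 : ∀ᵐ x : Rn N, x ∉ Ω := by
      filter_upwards [h5, hpos] with x hx hx0 hxΩ
      linarith [hx hxΩ, hx0 hxΩ]
    exact (hΩo.measure_pos volume hΩc.nonempty).ne' (measure_eq_zero_iff_ae_notMem.2 h6)
  obtain ⟨C1, hC1, h1⟩ := upper_bound hs0 haNs hlam hΩo hΩb hd hS1o hS1m hχ1E hχ1_eigen hξ0
  obtain ⟨C2, hC2, h2⟩ := lower_bound hs0 haNs hlam hΩo hΩb hΩc.nonempty hd hS1o hS1m hχ1E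
    hpos hχ1_eigen hξ0
  refine ⟨C1 + C2, by positivity, ?_⟩
  filter_upwards [h1, h2, hpos] with x hx1 hx2 hx0 hxΩ
  have a1 := hx1 hxΩ
  have a2 := hx2 hxΩ
  have a0 := hx0 hxΩ
  have hξpos : 0 < ξ0 x := by
    by_contra hc
    push Not at hc
    nlinarith
  constructor
  · rw [inv_mul_le_iff₀ (by positivity)]
    nlinarith [mul_pos hC1 a0]
  · nlinarith [mul_pos hC2 hξpos]
end
end
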